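/- arXiv:2309.13727 — 2 statements merged into one kernel-verified Lean document; each statement's English description precedes it below -/
import Mathlib

section
/- In any nondegenerate triangle, the distance from the incenter X1 to the circumcenter X3 satisfies dist(X1, X3) ≥ (3/2 + √2)·dist(X1, X7), where X7 is the Gergonne point. -/
/-- The point with normalized barycentric coordinates `(x : y : z)`
with respect to the triangle `A B C`. -/
noncomputable def bary (A B C : EuclideanSpace ℝ (Fin 2)) (x y z : ℝ) :
    EuclideanSpace ℝ (Fin 2) :=
  (x + y + z)⁻¹ • (x • A + y • B + z • C)

/-- The triangle center with barycentric coordinates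
`(f a b c : f b c a : f c a b)` where `a, b, c` are the side lengths. -/
noncomputable def tcenter (f : ℝ → ℝ → ℝ → ℝ) (A B C : EuclideanSpace ℝ (Fin 2)) :
    EuclideanSpace ℝ (Fin 2) :=
  bary A B C (f (dist B C) (dist C A) (dist A B))
    (f (dist C A) (dist A B) (dist B C))
    (f (dist A B) (dist B C) (dist C A))

lemma bary_dist_sq (A B C : EuclideanSpace ℝ (Fin 2)) (x y z x' y' z' : ℝ)
    (h : x + y + z ≠ 0) (h' : x' + y' + z' ≠ 0) :
    dist (bary A B C x y z) (bary A B C x' y' z') ^ 2 =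
      -(dist B C ^ 2 * (y / (x + y + z) - y' / (x' + y' + z')) *
            (z / (x + y + z) - z' / (x' + y' + z'))
        + dist C A ^ 2 * (z / (x + y + z) - z' / (x' + y' + z')) *
            (x / (x + y + z) - x' / (x' + y' + z'))
        + dist A B ^ 2 * (x / (x + y + z) - x' / (x' + y' + z')) *
            (y / (x + y + z) - y' / (x' + y' + z'))) := by
  have key : ∀ P Q : EuclideanSpace ℝ (Fin 2),
      dist P Q ^ 2 = (P 0 - Q 0) ^ 2 + (P 1 - Q 1) ^ 2 := by
    intro P Q
    rw [EuclideanSpace.dist_eq, Real.sq_sqrt (by positivity)]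
    simp [Fin.sum_univ_two, Real.dist_eq, sq_abs]
  have h1 : x / (x + y + z) = 1 - y / (x + y + z) - z / (x + y + z) := by
    field_simp; ring
  have h2 : x' / (x' + y' + z') = 1 - y' / (x' + y' + z') - z' / (x' + y' + z') := by
    field_simp; ring
  have e : ∀ i, (bary A B C x y z) i =
      x / (x + y + z) * A i + y / (x + y + z) * B i + z / (x + y + z) * C i := by
    intro i; simp [bary]; ring
  have e' : ∀ i, (bary A B C x' y' z') i = x' / (x' + y' + z') * A i
      + y' / (x' + y' + z') * B i + z' / (x' + y' + z') * C i := by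
    intro i; simp [bary]; ring
  rw [key, key, key, key, e, e, e', e', h1, h2]
  ring

lemma core_ineq (k X σ : ℝ) (hk : 0 ≤ k) (hk2 : 4 * k ^ 2 = 12 * k - 1) (hX : 2 ≤ X)
    (hf : (σ - 2 * X ^ 2 - 10 * X + 1) ^ 2 ≤ 4 * (X - 2) ^ 3 * X) :
    k ^ 2 * ((4 * X + 1) ^ 2 - 3 * σ) ≤ X * (X - 2) * (4 * X + 1) ^ 2 := by
  obtain ⟨D, hD0, hD⟩ : ∃ D : ℝ, 0 ≤ D ∧ D ^ 2 = X * (X - 2) :=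
    ⟨√(X * (X - 2)), Real.sqrt_nonneg _, Real.sq_sqrt (by nlinarith)⟩
  have h1 : (σ - 2 * X ^ 2 - 10 * X + 1) ^ 2 ≤ (2 * (X - 2) * D) ^ 2 := by
    have : (2 * (X - 2) * D) ^ 2 = 4 * (X - 2) ^ 3 * X := by
      rw [mul_pow, hD]; ring
    rw [this]; exact hf
  have h2 := (abs_le_of_sq_le_sq' h1 (by have : 0 ≤ X - 2 := by linarith
                                         positivity)).1
  have h3 : (4 * X + 1) ^ 2 - 3 * σ ≤ (X - 2) * (10 * X - 2 + 6 * D) := by nlinarith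
  have h4 : k ^ 2 * (10 * X - 2 + 6 * D) ≤ X * (4 * X + 1) ^ 2 := by
    obtain ⟨t, rfl⟩ : ∃ t, D = X * t := ⟨D / X, by field_simp⟩
    have ht0 : 0 ≤ t := by
      by_contra hc
      nlinarith
    have hX' : X * (1 - t ^ 2) = 2 := by
      have : X * (X * (1 - t ^ 2)) = X * 2 := by nlinarith
      exact mul_left_cancel₀ (by linarith) this
    have hw : 0 < 1 - t ^ 2 := by
      by_contra hc
      nlinarith
    have hXe : X = 2 / (1 - t ^ 2) := by field_simp; linarith
    have ht1 : t < 1 := by nlinarith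
    have hkp : 0 < k := by
      rcases hk.eq_or_lt with h | h
      · rw [← h] at hk2; norm_num at hk2
      · exact h
    have hq : k * (1 - t ^ 2) ≤ 3 - t := by
      have : 0 ≤ 4 * k * (3 - t - k * (1 - t ^ 2)) := by nlinarith [sq_nonneg (2 * k * t - 1)]
      have := nonneg_of_mul_nonneg_right this (by positivity)
      linarith
    have hq2 : (k * (1 - t ^ 2)) ^ 2 ≤ (3 - t) ^ 2 := pow_le_pow_left₀ (by positivity) hq 2
    have e : X * (4 * X + 1) ^ 2 - k ^ 2 * (10 * X - 2 + 6 * (X * t)) =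
        2 * (t + 3) ^ 2 / (1 - t ^ 2) ^ 3 * ((3 - t) ^ 2 - (k * (1 - t ^ 2)) ^ 2) := by
      rw [hXe]; field_simp; ring
    have : 0 ≤ 2 * (t + 3) ^ 2 / (1 - t ^ 2) ^ 3 * ((3 - t) ^ 2 - (k * (1 - t ^ 2)) ^ 2) :=
      mul_nonneg (by positivity) (by linarith)
    linarith
  calc k ^ 2 * ((4 * X + 1) ^ 2 - 3 * σ) ≤ k ^ 2 * ((X - 2) * (10 * X - 2 + 6 * D)) := by gcongr
    _ = (X - 2) * (k ^ 2 * (10 * X - 2 + 6 * D)) := by ring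
    _ ≤ (X - 2) * (X * (4 * X + 1) ^ 2) := mul_le_mul_of_nonneg_left h4 (by linarith)
    _ = _ := by ring

lemma ravi_ineq (k x y z : ℝ) (hk : 0 ≤ k) (hk2 : 4 * k ^ 2 = 12 * k - 1)
    (hx : 0 < x) (hy : 0 < y) (hz : 0 < z) :
    k ^ 2 * (x * y * z / (x + y + z) *
      (1 - 3 * (x + y + z) * (x * y * z) / (x * y + y * z + z * x) ^ 2)) ≤
    ((x + y) * (y + z) * (z + x)) * ((x + y) * (y + z) * (z + x) - 8 * (x * y * z)) /
      (16 * (x * y * z) * (x + y + z)) := by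
  obtain ⟨X, hXd⟩ : ∃ X, X = (x + y) * (y + z) * (z + x) / (4 * (x * y * z)) := ⟨_, rfl⟩
  have hX : 2 ≤ X := by
    rw [hXd, le_div_iff₀ (by positivity)]
    nlinarith [mul_nonneg hx.le (sq_nonneg (y - z)), mul_nonneg hy.le (sq_nonneg (z - x)),
      mul_nonneg hz.le (sq_nonneg (x - y))]
  have h := core_ineq k X ((x + y + z) ^ 3 / (x * y * z)) hk hk2 hX (by
    have : 4 * (X - 2) ^ 3 * X
        - ((x + y + z) ^ 3 / (x * y * z) - 2 * X ^ 2 - 10 * X + 1) ^ 2 =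
        (x + y + z) ^ 3 / (4 * (x * y * z) ^ 3) * ((x - y) * (y - z) * (z - x)) ^ 2 := by
      rw [hXd]; field_simp; ring
    have h2 : 0 ≤ (x + y + z) ^ 3 / (4 * (x * y * z) ^ 3) * ((x - y) * (y - z) * (z - x)) ^ 2 := by
      positivity
    linarith)
  have hs : 4 * X + 1 = (x + y + z) * (x * y + y * z + z * x) / (x * y * z) := by
    rw [hXd]; field_simp; ring
  have hc : 0 < x * y * z / (x + y + z) / (4 * X + 1) ^ 2 := by positivity
  have h' := mul_le_mul_of_nonneg_left h hc.le
  have e1 : x * y * z / (x + y + z) / (4 * X + 1) ^ 2 *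
      (k ^ 2 * ((4 * X + 1) ^ 2 - 3 * ((x + y + z) ^ 3 / (x * y * z)))) =
      k ^ 2 * (x * y * z / (x + y + z) *
      (1 - 3 * (x + y + z) * (x * y * z) / (x * y + y * z + z * x) ^ 2)) := by
    rw [hs]; field_simp
  have e2 : x * y * z / (x + y + z) / (4 * X + 1) ^ 2 * (X * (X - 2) * (4 * X + 1) ^ 2) =
      ((x + y) * (y + z) * (z + x)) * ((x + y) * (y + z) * (z + x) - 8 * (x * y * z)) /
      (16 * (x * y * z) * (x + y + z)) := by
    have : 4 * X + 1 ≠ 0 := by positivity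
    have : x * y * z / (x + y + z) / (4 * X + 1) ^ 2 * (X * (X - 2) * (4 * X + 1) ^ 2) =
      x * y * z / (x + y + z) * (X * (X - 2)) := by field_simp
    rw [this, hXd]; field_simp; ring
  rw [e1, e2] at h'
  exact h'

lemma strict_tri (A B C : EuclideanSpace ℝ (Fin 2)) (h : ¬ Collinear ℝ {A, B, C}) :
    dist A C < dist A B + dist B C := by
  refine lt_of_le_of_ne (dist_triangle _ _ _) fun he => h ?_
  exact (dist_add_dist_eq_iff.1 he.symm).collinear

theorem stmt_9 (A B C : EuclideanSpace ℝ (Fin 2))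
    (h : AffineIndependent ℝ ![A, B, C]) :
    dist (tcenter (fun a b c => a) A B C) (tcenter (fun a b c => a^2*(a^2 - b^2 - c^2)) A B C) ≥ (3/2 + Real.sqrt 2) * dist (tcenter (fun a b c => a) A B C) (tcenter (fun a b c => (a + b - c)*(a - b + c)) A B C) := by
  have hn : ¬ Collinear ℝ {A, B, C} := affineIndependent_iff_not_collinear_set.1 h
  have t1 := strict_tri A B C hn
  have t2 := strict_tri B C A (by
    rwa [show ({B, C, A} : Set (EuclideanSpace ℝ (Fin 2))) = {A, B, C} by
      ext; simp; tauto])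
  have t3 := strict_tri C A B (by
    rwa [show ({C, A, B} : Set (EuclideanSpace ℝ (Fin 2))) = {A, B, C} by
      ext; simp; tauto])
  rw [dist_comm A C] at t1
  rw [dist_comm B A] at t2
  rw [dist_comm C B] at t3
  obtain ⟨x, hx⟩ : ∃ x, x = (dist C A + dist A B - dist B C) / 2 := ⟨_, rfl⟩
  obtain ⟨y, hy⟩ : ∃ y, y = (dist A B + dist B C - dist C A) / 2 := ⟨_, rfl⟩
  obtain ⟨z, hz⟩ : ∃ z, z = (dist B C + dist C A - dist A B) / 2 := ⟨_, rfl⟩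
  have hx0 : 0 < x := by linarith
  have hy0 : 0 < y := by linarith
  have hz0 : 0 < z := by linarith
  have ha : dist B C = y + z := by linarith
  have hb : dist C A = z + x := by linarith
  have hc : dist A B = x + y := by linarith
  have s1 : y + z + (z + x) + (x + y) = 2 * (x + y + z) := by ring
  have s3 : (y + z) ^ 2 * ((y + z) ^ 2 - (z + x) ^ 2 - (x + y) ^ 2)
      + (z + x) ^ 2 * ((z + x) ^ 2 - (x + y) ^ 2 - (y + z) ^ 2)
      + (x + y) ^ 2 * ((x + y) ^ 2 - (y + z) ^ 2 - (z + x) ^ 2)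
      = - (16 * (x * y * z) * (x + y + z)) := by ring
  have s7 : (y + z + (z + x) - (x + y)) * (y + z - (z + x) + (x + y))
      + (z + x + (x + y) - (y + z)) * (z + x - (x + y) + (y + z))
      + (x + y + (y + z) - (z + x)) * (x + y - (y + z) + (z + x))
      = 4 * (x * y + y * z + z * x) := by ring
  have p1 : 0 < 2 * (x + y + z) := by positivity
  have p3 : 0 < 16 * (x * y * z) * (x + y + z) := by positivity
  have p7 : 0 < 4 * (x * y + y * z + z * x) := by positivity
  have hk : (0 : ℝ) ≤ 3 / 2 + √2 := by positivity
  have hk2 : 4 * (3 / 2 + √2) ^ 2 = 12 * (3 / 2 + √2) - 1 := by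
    nlinarith [Real.sq_sqrt (show (0 : ℝ) ≤ 2 by norm_num)]
  have main := ravi_ineq _ x y z hk hk2 hx0 hy0 hz0
  refine abs_le_of_sq_le_sq' ?_ dist_nonneg |>.2
  rw [mul_pow]
  simp only [tcenter]
  rw [bary_dist_sq _ _ _ _ _ _ _ _ _ (by rw [ha, hb, hc, s1]; exact p1.ne')
      (by rw [ha, hb, hc, s7]; exact p7.ne'),
    bary_dist_sq _ _ _ _ _ _ _ _ _ (by rw [ha, hb, hc, s1]; exact p1.ne')
      (by rw [ha, hb, hc, s3]; exact (neg_neg_of_pos p3).ne)]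
  rw [ha, hb, hc, s1, s3, s7]
  refine le_of_eq_of_le ?_ (main.trans_eq ?_)
  · congr 1
    field_simp
    ring
  · simp only [div_neg]
    field_simp
    ring
end

section
/- In any nondegenerate triangle, the distance from the centroid X2 to the incenter X1 and the distance from X2 to the symmedian point X6 satisfy (6√2 − 8)·dist(X2, X6) ≤ dist(X2, X1) ≤ dist(X2, X6). -/
lemma le_of_sq_le_sq_aux {x y : ℝ} (h : x^2 ≤ y^2) (hy : 0 ≤ y) : x ≤ y :=
  (le_abs_self x).trans (abs_le_of_sq_le_sq h hy)

def p1 (a b c : ℝ) : ℝ :=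
  -(a^3+b^3+c^3) + 2*(a^2*b+a^2*c+b^2*a+b^2*c+c^2*a+c^2*b) - 9*a*b*c

def p2 (a b c : ℝ) : ℝ :=
  -(a^6+b^6+c^6) + 3*(a^4*b^2+a^4*c^2+b^4*a^2+b^4*c^2+c^4*a^2+c^4*b^2) - 15*a^2*b^2*c^2

lemma upper_aux (x u v : ℝ) (hx : 0 ≤ x) (hu : 0 ≤ u) (hv : 0 ≤ v) :
    p1 (2*x+2*u+v) (2*x+u+v) (2*x+u) * ((2*x+2*u+v)^2 + (2*x+u+v)^2 + (2*x+u)^2)^2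
    ≤ p2 (2*x+2*u+v) (2*x+u+v) (2*x+u) * ((2*x+2*u+v) + (2*x+u+v) + (2*x+u)) := by
  rw [← sub_nonneg]
  have : 0 ≤ (24)*u^1*v^6 + (162)*u^2*v^5 + (408)*u^3*v^4 + (450)*u^4*v^3 + (180)*u^5*v^2 + (48)*x^1*v^6 + (552)*x^1*u^1*v^5 + (2046)*x^1*u^2*v^4 + (3204)*x^1*u^3*v^3 + (2142)*x^1*u^4*v^2 + (648)*x^1*u^5*v^1 + (216)*x^1*u^6 + (408)*x^2*v^5 + (3000)*x^2*u^1*v^4 + (7176)*x^2*u^2*v^3 + (6864)*x^2*u^3*v^2 + (3120)*x^2*u^4*v^1 + (1248)*x^2*u^5 + (1320)*x^3*v^4 + (6288)*x^3*u^1*v^3 + (8952)*x^3*u^2*v^2 + (5328)*x^3*u^3*v^1 + (2664)*x^3*u^4 + (1824)*x^4*v^3 + (4896)*x^4*u^1*v^2 + (3744)*x^4*u^2*v^1 + (2496)*x^4*u^3 + (864)*x^5*v^2 + (864)*x^5*u^1*v^1 + (864)*x^5*u^2 := by positivity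
  unfold p1 p2
  refine this.trans_eq ?_
  ring

lemma lower_aux (d e f k : ℝ) (he : 0 ≤ e) (hf : 0 ≤ f) (hk : k = 6 * Real.sqrt 2 - 8) :
    k^2 * (p2 (e+f+d) (e+f-d) (2*e+f) * ((e+f+d) + (e+f-d) + (2*e+f)))
    ≤ p1 (e+f+d) (e+f-d) (2*e+f) * ((e+f+d)^2 + (e+f-d)^2 + (2*e+f)^2)^2 := by
  have hw : Real.sqrt 2 ^ 2 = 2 := Real.sq_sqrt (by norm_num)
  have hw0 : 0 ≤ Real.sqrt 2 := Real.sqrt_nonneg 2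
  generalize Real.sqrt 2 = w at *
  have hw1 : w ≤ 17/12 := by nlinarith
  have hw2 : 4/3 ≤ w := by nlinarith
  have hk0 : 0 ≤ k := by linarith
  have hk1 : k ≤ 1/2 := by linarith
  have hK : k^2 ≤ 1/4 := by nlinarith
  have hK0 : 0 ≤ k^2 := sq_nonneg k
  obtain ⟨R1, hR1⟩ : ∃ R1, R1 = (27)*f^5 + (288)*e^1*f^4 + (1080)*e^2*f^3 + (1920)*e^3*f^2 + (1668)*e^4*f^1 + (576)*e^5 + (36)*d^2*f^3 + (288)*d^2*e^1*f^2 + (588)*d^2*e^2*f^1 + (384)*d^2*e^3 + (12)*d^4*f^1 + (64)*d^4*e^1 := ⟨_, rfl⟩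
  obtain ⟨R2, hR2⟩ : ∃ R2, R2 = (108)*f^5 + (1044)*e^1*f^4 + (3558)*e^2*f^3 + (5664)*e^3*f^2 + (4332)*e^4*f^1 + (1296)*e^5 + (-135)*d^2*f^3 + (-504)*d^2*e^1*f^2 + (-648)*d^2*e^2*f^1 + (-288)*d^2*e^3 + (12)*d^4*f^1 + (16)*d^4*e^1 := ⟨_, rfl⟩
  have d2 : 0 ≤ d^2 := sq_nonneg d
  have d4 : 0 ≤ d^4 := by positivity
  have h1 : 0 ≤ R1 := by rw [hR1]; positivity
  have h2 : 0 ≤ R1 - R2/4 := by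
    have e1 : R1 - R2/4 = ((216)*e^1*f^4 + (1524)*e^2*f^3 + (4032)*e^3*f^2 + (4680)*e^4*f^1 + (2016)*e^5 + (558)*d^2*f^3 + (3312)*d^2*e^1*f^2 + (6000)*d^2*e^2*f^1 + (3648)*d^2*e^3 + (72)*d^4*f^1 + (480)*d^4*e^1)/8 := by rw [hR1, hR2]; ring
    rw [e1]; positivity
  have hR : k^2 * R2 ≤ R1 := by nlinarith
  have hA : p1 (e+f+d) (e+f-d) (2*e+f) * ((e+f+d)^2 + (e+f-d)^2 + (2*e+f)^2)^2
      = e^2*f*(3*f^2+8*e*f+6*e^2)^2 + d^2*R1 := by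
    rw [hR1]; unfold p1; ring
  have hB : p2 (e+f+d) (e+f-d) (2*e+f) * ((e+f+d) + (e+f-d) + (2*e+f))
      = e^2*f*(6*f^2+17*e*f+12*e^2)^2 + d^2*R2 := by
    rw [hR2]; unfold p2; ring
  have hC : (3*f^2+8*e*f+6*e^2) - k*(6*f^2+17*e*f+12*e^2) = (51-36*w)*(f-w*e)^2 := by
    rw [hk]
    linear_combination (-72*e*f - 51*e^2 + 36*w*e^2) * hw
  have hD : 0 ≤ (3*f^2+8*e*f+6*e^2) - k*(6*f^2+17*e*f+12*e^2) := by
    rw [hC]; exact mul_nonneg (by linarith) (sq_nonneg _)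
  have hE : (k*(6*f^2+17*e*f+12*e^2))^2 ≤ (3*f^2+8*e*f+6*e^2)^2 :=
    pow_le_pow_left₀ (by positivity) (by linarith) 2
  rw [hA, hB]
  have t1 := mul_le_mul_of_nonneg_left hE (show 0 ≤ e^2*f by positivity)
  have t2 := mul_le_mul_of_nonneg_left hR d2
  linarith [t1, t2]

lemma upper_poly (a b c : ℝ) (h1 : a ≤ b + c) (h2 : b ≤ c + a) (h3 : c ≤ a + b) :
    p1 a b c * (a^2+b^2+c^2)^2 ≤ p2 a b c * (a+b+c) := by
  have key : ∀ a b c : ℝ, b ≤ a → c ≤ b → a ≤ b + c →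
      p1 a b c * (a^2+b^2+c^2)^2 ≤ p2 a b c * (a+b+c) := by
    intro a b c hab hbc h
    have := upper_aux ((b+c-a)/2) (a-b) (b-c) (by linarith) (by linarith) (by linarith)
    have ea : 2*((b+c-a)/2)+2*(a-b)+(b-c) = a := by ring
    have eb : 2*((b+c-a)/2)+(a-b)+(b-c) = b := by ring
    have ec : 2*((b+c-a)/2)+(a-b) = c := by ring
    rwa [ea, eb, ec] at this
  rcases le_total a b with hab | hab <;> rcases le_total b c with hbc | hbc <;>
    rcases le_total a c with hac | hac
  · have := key c b a hbc hab (by linarith); unfold p1 p2 at *; linarith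
  · have := key c b a hbc hab (by linarith); unfold p1 p2 at *; linarith
  · have := key b c a hbc hac (by linarith); unfold p1 p2 at *; linarith
  · have := key b a c hab hac (by linarith); unfold p1 p2 at *; linarith
  · have := key c a b hac hab (by linarith); unfold p1 p2 at *; linarith
  · have := key a c b hac hbc (by linarith); unfold p1 p2 at *; linarith
  · have := key a b c hab hbc (by linarith); unfold p1 p2 at *; linarith
  · have := key a b c hab hbc (by linarith); unfold p1 p2 at *; linarith

lemma lower_poly (a b c k : ℝ) (hk : k = 6 * Real.sqrt 2 - 8)
    (h1 : a ≤ b + c) (h2 : b ≤ c + a) (h3 : c ≤ a + b) :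
    k^2 * (p2 a b c * (a+b+c)) ≤ p1 a b c * (a^2+b^2+c^2)^2 := by
  have key : ∀ a b c : ℝ, a ≤ c → b ≤ c → c ≤ a + b →
      k^2 * (p2 a b c * (a+b+c)) ≤ p1 a b c * (a^2+b^2+c^2)^2 := by
    intro a b c hab hbc h
    have := lower_aux ((a-b)/2) (c-(a+b)/2) (a+b-c) k (by linarith) (by linarith) hk
    have ea : c-(a+b)/2 + (a+b-c) + (a-b)/2 = a := by ring
    have eb : c-(a+b)/2 + (a+b-c) - (a-b)/2 = b := by ring
    have ec : 2*(c-(a+b)/2) + (a+b-c) = c := by ring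
    rwa [ea, eb, ec] at this
  have hc : (a ≤ c ∧ b ≤ c) ∨ (b ≤ a ∧ c ≤ a) ∨ (c ≤ b ∧ a ≤ b) := by
    rcases le_total a b with hab | hab <;> rcases le_total b c with hbc | hbc <;>
      rcases le_total a c with hac | hac <;> grind
  rcases hc with ⟨u, v⟩ | ⟨u, v⟩ | ⟨u, v⟩
  · exact key a b c u v h3
  · have := key b c a u v h1; unfold p1 p2 at *; linarith
  · have := key c a b u v h2; unfold p1 p2 at *; linarith

lemma dist_sq_coord (P Q : EuclideanSpace ℝ (Fin 2)) :
    dist P Q ^ 2 = (P 0 - Q 0)^2 + (P 1 - Q 1)^2 := by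
  rw [EuclideanSpace.dist_eq, Real.sq_sqrt (by positivity)]
  simp [Fin.sum_univ_two, Real.dist_eq, sq_abs]

lemma dist_bary (A B C : EuclideanSpace ℝ (Fin 2)) (x y z : ℝ) (h : x + y + z ≠ 0) :
    dist (bary A B C 1 1 1) (bary A B C x y z) ^ 2 * (9 * (x+y+z)^2) =
    -(dist B C ^2 * ((2*y-x-z)*(2*z-x-y)) + dist C A ^2 * ((2*z-x-y)*(2*x-y-z))
      + dist A B ^2 * ((2*x-y-z)*(2*y-x-z))) := by
  simp only [dist_sq_coord, bary, PiLp.smul_apply, PiLp.add_apply, smul_eq_mul]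
  field_simp
  ring

theorem stmt_10 (A B C : EuclideanSpace ℝ (Fin 2))
    (h : AffineIndependent ℝ ![A, B, C]) :
    (6 * Real.sqrt 2 - 8) * dist (tcenter (fun a b c => (1:Real)) A B C) (tcenter (fun a b c => a^2) A B C) ≤ dist (tcenter (fun a b c => (1:Real)) A B C) (tcenter (fun a b c => a) A B C) ∧
      dist (tcenter (fun a b c => (1:Real)) A B C) (tcenter (fun a b c => a) A B C) ≤ dist (tcenter (fun a b c => (1:Real)) A B C) (tcenter (fun a b c => a^2) A B C) := by
  have hBC : B ≠ C := fun hh => by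
    have := h.injective (a₁ := 1) (a₂ := 2) (by simpa using hh)
    simp at this
  have ha : 0 < dist B C := dist_pos.2 hBC
  have hb : 0 ≤ dist C A := dist_nonneg
  have hc : 0 ≤ dist A B := dist_nonneg
  have h1 : dist B C ≤ dist C A + dist A B := by
    have := dist_triangle B A C
    rw [dist_comm B A, dist_comm A C] at this; linarith
  have h2 : dist C A ≤ dist A B + dist B C := by
    have := dist_triangle C B A
    rw [dist_comm C B, dist_comm B A] at this; linarith
  have h3 : dist A B ≤ dist B C + dist C A := by
    have := dist_triangle A C B
    rw [dist_comm C B, dist_comm A C] at this; linarith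
  have hs : 0 < dist B C + dist C A + dist A B := by linarith
  have hS : 0 < dist B C ^ 2 + dist C A ^ 2 + dist A B ^ 2 := by positivity
  have e1 := dist_bary A B C _ _ _ hs.ne'
  have e2 := dist_bary A B C _ _ _ hS.ne'
  simp only [tcenter]
  have u := upper_poly _ _ _ h1 h2 h3
  have l := lower_poly _ _ _ _ rfl h1 h2 h3
  have hk0 : 0 ≤ 6 * Real.sqrt 2 - 8 := by
    have : (4/3 : ℝ) ≤ Real.sqrt 2 := Real.le_sqrt_of_sq_le (by norm_num)
    linarith
  generalize 6 * Real.sqrt 2 - 8 = k at *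
  have hI : 0 ≤ dist (bary A B C 1 1 1) (bary A B C (dist B C) (dist C A) (dist A B)) := dist_nonneg
  have hK : 0 ≤ dist (bary A B C 1 1 1) (bary A B C (dist B C ^ 2) (dist C A ^ 2) (dist A B ^ 2)) := dist_nonneg
  generalize dist (bary A B C 1 1 1) (bary A B C (dist B C) (dist C A) (dist A B)) = I at *
  generalize dist (bary A B C 1 1 1) (bary A B C (dist B C ^ 2) (dist C A ^ 2) (dist A B ^ 2)) = K at *
  generalize dist B C = a at *
  generalize dist C A = b at *
  generalize dist A B = c at *
  have f1 : I^2 * (9 * (a+b+c)) = p1 a b c := by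
    apply mul_right_cancel₀ hs.ne'
    unfold p1
    linear_combination e1
  have f2 : K^2 * (9 * (a^2+b^2+c^2)^2) = p2 a b c := by
    unfold p2
    linear_combination e2
  rw [← f1, ← f2] at u l
  have hpos : 0 < 9 * (a+b+c) * (a^2+b^2+c^2)^2 := by positivity
  constructor
  · refine le_of_sq_le_sq_aux ?_ hI
    refine le_of_mul_le_mul_right ?_ hpos
    linarith
  · refine le_of_sq_le_sq_aux ?_ hK
    refine le_of_mul_le_mul_right ?_ hpos
    linarith
end
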